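/- Under the hypotheses of the inductive estimation (Ω bounded open, F continuous, uniformly elliptic with constants 0 < λ ≤ Λ, satisfying the structure condition with constant γ and the joint modulus bound |F(M,P,r,x,t) - F(M,P,r,y,s)| ≤ σ₁(|x-y|) + σ₂(|t-s|), sup_{(x,t)}|F(0,0,0,x,t)| ≤ K, and z_{n,h} the Rothe approximations), one has for every n ≥ 0 the bound ‖z_{n+1,h} - z_{n,h}‖_{L^∞(Ω)} ≤ ‖z_{1,h}‖_{L^∞(Ω)} + n h σ₂(h). Consequently, if in addition σ₂(h) ≤ C₀ h for all h ∈ (0,1], then for every fixed T > 0 there is a constant C, depending only on K, C₀ and T and not on h, such that for n = ⌊T/h⌋ one has ‖z_{n+1,h} - z_{n,h}‖_{L^∞(Ω)} ≤ C h. -/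

import Mathlib

open scoped RealInnerProductSpace
open MeasureTheory Filter Topology Asymptotics Metric Set

noncomputable section

abbrev Eucl (d : ℕ) := EuclideanSpace ℝ (Fin d)

open Classical in
noncomputable def eigs {d : ℕ} (M : Matrix (Fin d) (Fin d) ℝ) : Fin d → ℝ :=
  if h : M.IsHermitian then h.eigenvalues else 0

noncomputable def specNorm {d : ℕ} (M : Matrix (Fin d) (Fin d) ℝ) : ℝ := ⨆ i, |eigs M i|
noncomputable def posPartNorm {d : ℕ} (M : Matrix (Fin d) (Fin d) ℝ) : ℝ := ⨆ i, max (eigs M i) 0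
noncomputable def negPartNorm {d : ℕ} (M : Matrix (Fin d) (Fin d) ℝ) : ℝ := ⨆ i, max (-(eigs M i)) 0
noncomputable def posPartTrace {d : ℕ} (M : Matrix (Fin d) (Fin d) ℝ) : ℝ := ∑ i, max (eigs M i) 0
noncomputable def negPartTrace {d : ℕ} (M : Matrix (Fin d) (Fin d) ℝ) : ℝ := ∑ i, max (-(eigs M i)) 0

noncomputable def pucciPlus {d : ℕ} (lam Lam : ℝ) (M : Matrix (Fin d) (Fin d) ℝ) : ℝ :=
  -lam * posPartTrace M + Lam * negPartTrace M

noncomputable def pucciMinus {d : ℕ} (lam Lam : ℝ) (M : Matrix (Fin d) (Fin d) ℝ) : ℝ :=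
  -Lam * posPartTrace M + lam * negPartTrace M

noncomputable def gradAt {d : ℕ} (φ : Eucl d → ℝ) (x : Eucl d) : Eucl d :=
  (EuclideanSpace.equiv (Fin d) ℝ).symm (fun i => fderiv ℝ φ x (EuclideanSpace.single i 1))

noncomputable def hessAt {d : ℕ} (φ : Eucl d → ℝ) (x : Eucl d) : Matrix (Fin d) (Fin d) ℝ :=
  Matrix.of fun i j =>
    fderiv ℝ (fun y => fderiv ℝ φ y (EuclideanSpace.single j 1)) x (EuclideanSpace.single i 1)

noncomputable def quadForm {d : ℕ} (M : Matrix (Fin d) (Fin d) ℝ) (v : Eucl d) : ℝ :=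
  ∑ i, ∑ j, M i j * v i * v j

def ViscSubsol {d : ℕ} (Ω : Set (Eucl d))
    (G : Matrix (Fin d) (Fin d) ℝ → Eucl d → ℝ → Eucl d → ℝ)
    (g : Eucl d → ℝ) (u : Eucl d → ℝ) : Prop :=
  ∀ x₀ ∈ Ω, ∀ φ : Eucl d → ℝ, ContDiffAt ℝ 2 φ x₀ →
    IsLocalMax (fun x => u x - φ x) x₀ →
    G (hessAt φ x₀) (gradAt φ x₀) (u x₀) x₀ ≤ g x₀

def ViscSupersol {d : ℕ} (Ω : Set (Eucl d))
    (G : Matrix (Fin d) (Fin d) ℝ → Eucl d → ℝ → Eucl d → ℝ)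
    (g : Eucl d → ℝ) (u : Eucl d → ℝ) : Prop :=
  ∀ x₀ ∈ Ω, ∀ φ : Eucl d → ℝ, ContDiffAt ℝ 2 φ x₀ →
    IsLocalMin (fun x => u x - φ x) x₀ →
    g x₀ ≤ G (hessAt φ x₀) (gradAt φ x₀) (u x₀) x₀

def ViscSol {d : ℕ} (Ω : Set (Eucl d))
    (G : Matrix (Fin d) (Fin d) ℝ → Eucl d → ℝ → Eucl d → ℝ)
    (g : Eucl d → ℝ) (u : Eucl d → ℝ) : Prop :=
  ViscSubsol Ω G g u ∧ ViscSupersol Ω G g u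

def UniformlyElliptic {d : ℕ} (lam Lam : ℝ) (X : Set (Eucl d)) (Tset : Set ℝ)
    (F : Matrix (Fin d) (Fin d) ℝ → Eucl d → ℝ → Eucl d → ℝ → ℝ) : Prop :=
  ∀ M N : Matrix (Fin d) (Fin d) ℝ, M.IsSymm → N.PosSemidef →
    ∀ (P : Eucl d) (v : ℝ), ∀ x ∈ X, ∀ t ∈ Tset,
      -Lam * specNorm N ≤ F (M + N) P v x t - F M P v x t ∧
      F (M + N) P v x t - F M P v x t ≤ -lam * specNorm N

def IsModulus (σ : ℝ → ℝ) : Prop := Monotone σ ∧ Continuous σ ∧ σ 0 = 0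

def StructureCondition {d : ℕ} (lam Lam gam : ℝ) (ω : ℝ → ℝ → ℝ)
    (X : Set (Eucl d)) (Tset : Set ℝ)
    (F : Matrix (Fin d) (Fin d) ℝ → Eucl d → ℝ → Eucl d → ℝ → ℝ) : Prop :=
  (∀ R > 0, IsModulus (ω R)) ∧
  ∀ R > 0, ∀ M N : Matrix (Fin d) (Fin d) ℝ, M.IsSymm → N.IsSymm →
    ∀ (P Q : Eucl d) (r s : ℝ), |r| ≤ R → |s| ≤ R → ∀ x ∈ X, ∀ t ∈ Tset,
      pucciMinus lam Lam (M - N) - gam * ‖P - Q‖ - ω R (max (s - r) 0)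
          ≤ F M P r x t - F N Q s x t ∧
      F M P r x t - F N Q s x t
          ≤ pucciPlus lam Lam (M - N) + gam * ‖P - Q‖ + ω R (max (r - s) 0)

noncomputable def supConv {d : ℕ} (Ω : Set (Eucl d)) (u : Eucl d → ℝ) (ε : ℝ) (x : Eucl d) : ℝ :=
  sSup ((fun y => u y - ‖x - y‖ ^ 2 / (2 * ε)) '' closure Ω)

noncomputable def infConv {d : ℕ} (Ω : Set (Eucl d)) (u : Eucl d → ℝ) (ε : ℝ) (x : Eucl d) : ℝ :=
  sInf ((fun y => u y + ‖x - y‖ ^ 2 / (2 * ε)) '' closure Ω)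

noncomputable def supNorm {d : ℕ} (Ω : Set (Eucl d)) (u : Eucl d → ℝ) : ℝ :=
  sSup ((fun y => |u y|) '' closure Ω)

def RotheStep {d : ℕ} (Ω : Set (Eucl d))
    (F : Matrix (Fin d) (Fin d) ℝ → Eucl d → ℝ → Eucl d → ℝ → ℝ)
    (h : ℝ) (m : ℕ) (zprev znext : Eucl d → ℝ) : Prop :=
  ContinuousOn znext (closure Ω) ∧
  ViscSol Ω (fun M P r x => F M P r x ((m + 1) * h) + r / h) (fun x => zprev x / h) znext ∧
  ∀ x ∈ frontier Ω, znext x = 0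

noncomputable def rotheInterp {d : ℕ} (z : ℕ → Eucl d → ℝ) (h : ℝ) (x : Eucl d) (t : ℝ) : ℝ :=
  ((⌊t / h⌋₊ + 1 : ℝ) * h - t) / h * z ⌊t / h⌋₊ x + (t - (⌊t / h⌋₊ : ℝ) * h) / h * z (⌊t / h⌋₊ + 1) x

def HasSmoothBoundary {d : ℕ} (Ω : Set (Eucl d)) : Prop :=
  ∃ f : Eucl d → ℝ, ContDiff ℝ (⊤ : ℕ∞) f ∧ Ω = {x | f x < 0} ∧ ∀ x ∈ frontier Ω, fderiv ℝ f x ≠ 0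

def C21 {d : ℕ} (φ : Eucl d → ℝ → ℝ) : Prop :=
  (∀ t, ContDiff ℝ 2 fun x => φ x t) ∧
  (∀ x, ContDiff ℝ 1 fun t => φ x t) ∧
  Continuous (fun p : Eucl d × ℝ => φ p.1 p.2) ∧
  Continuous (fun p : Eucl d × ℝ => hessAt (fun x => φ x p.2) p.1) ∧
  Continuous (fun p : Eucl d × ℝ => gradAt (fun x => φ x p.2) p.1) ∧
  Continuous (fun p : Eucl d × ℝ => deriv (φ p.1) p.2)

def ParabolicViscSubsol {d : ℕ} (Ω : Set (Eucl d)) (T : ℝ)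
    (F : Matrix (Fin d) (Fin d) ℝ → Eucl d → ℝ → Eucl d → ℝ → ℝ)
    (u : Eucl d × ℝ → ℝ) : Prop :=
  ∀ φ : Eucl d → ℝ → ℝ, C21 φ → ∀ ε > (0:ℝ),
    (∀ x ∈ closure Ω, ∀ t ∈ Icc (0:ℝ) T,
      ε ≤ deriv (φ x) t +
        F (hessAt (fun y => φ y t) x) (gradAt (fun y => φ y t) x) (φ x t) x t) →
    ¬ ∃ p ∈ Ω ×ˢ Ioc (0:ℝ) T,
        IsLocalMaxOn (fun q : Eucl d × ℝ => u q - φ q.1 q.2) (Ω ×ˢ Ioc (0:ℝ) T) p ∧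
        u p - φ p.1 p.2 = 0

def ParabolicViscSupersol {d : ℕ} (Ω : Set (Eucl d)) (T : ℝ)
    (F : Matrix (Fin d) (Fin d) ℝ → Eucl d → ℝ → Eucl d → ℝ → ℝ)
    (u : Eucl d × ℝ → ℝ) : Prop :=
  ∀ φ : Eucl d → ℝ → ℝ, C21 φ → ∀ ε > (0:ℝ),
    (∀ x ∈ closure Ω, ∀ t ∈ Icc (0:ℝ) T,
      deriv (φ x) t +
        F (hessAt (fun y => φ y t) x) (gradAt (fun y => φ y t) x) (φ x t) x t ≤ -ε) →
    ¬ ∃ p ∈ Ω ×ˢ Ioc (0:ℝ) T,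
        IsLocalMinOn (fun q : Eucl d × ℝ => u q - φ q.1 q.2) (Ω ×ˢ Ioc (0:ℝ) T) p ∧
        u p - φ p.1 p.2 = 0

/-!
At an interior maximum of the difference of two consecutive Rothe steps the gradients agree and the
Hessians are ordered, so ellipticity and monotonicity leave only the zeroth-order term `r / h` and
the time modulus: the increment grows by at most `h * σ₂ h` per step. Induction gives the first
bound; constants as test functions give `‖z₁‖ ≤ K * h`, hence the second.

Since the steps are merely continuous, this comparison is made by doubling the variables. Where both
sup-convolutions touch the maximum, tilted by a small slope, they are squeezed between paraboloids;
their slopes are Lipschitz there, so Rademacher's theorem at a density point of the contact set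
(of positive measure, as in Jensen's lemma) yields second-order expansions. This takes the place of
Alexandrov's theorem in the theorem on sums.
-/

/-! ### Paraboloid contact and second-order expansions -/

section Contact

variable {E : Type*} [NormedAddCommGroup E] [InnerProductSpace ℝ E]

/-- The graph of `f` is touched at `ξ` from above and from below by paraboloids of opening `C` with
slope `q`, both inequalities being global. -/
def HasParaboloidContact (f : E → ℝ) (C : ℝ) (ξ q : E) : Prop :=
  ∀ x, |f x - f ξ - ⟪q, x - ξ⟫| ≤ C / 2 * ‖x - ξ‖ ^ 2

/-- `f` has at `ξ` a second-order Taylor expansion with gradient `q` and quadratic part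
`⟪X h, h⟫ / 2`. Only this quadratic form matters, so `X` is not required to be symmetric. -/
def HasSecondOrderExpansion (f : E → ℝ) (ξ q : E) (X : E →L[ℝ] E) : Prop :=
  (fun h => f (ξ + h) - f ξ - ⟪q, h⟫ - 1 / 2 * ⟪X h, h⟫) =o[𝓝 0] fun h => ‖h‖ ^ 2

lemma HasSecondOrderExpansion.add {f g : E → ℝ} {ξ q q' : E} {X Y : E →L[ℝ] E}
    (hf : HasSecondOrderExpansion f ξ q X) (hg : HasSecondOrderExpansion g ξ q' Y) :
    HasSecondOrderExpansion (fun x => f x + g x) ξ (q + q') (X + Y) := by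
  refine (IsLittleO.add hf hg).congr_left fun h => ?_
  simp only [inner_add_left, add_apply]
  ring

lemma HasSecondOrderExpansion.inner_self_nonpos {f : E → ℝ} {ξ q : E} {X : E →L[ℝ] E}
    (hf : HasSecondOrderExpansion f ξ q X) (hle : ∀ h, f (ξ + h) ≤ f ξ + ⟪q, h⟫) (h : E) :
    ⟪X h, h⟫ ≤ 0 := by
  have hline : Tendsto (fun t : ℝ => t • h) (𝓝 0) (𝓝 0) :=
    Continuous.tendsto' (by fun_prop) 0 0 (zero_smul ℝ h)
  have hsq : (fun t : ℝ => ‖t • h‖ ^ 2) =O[𝓝 0] fun t => t ^ 2 :=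
    .of_bound (‖h‖ ^ 2) (.of_forall fun t => by simp [norm_smul, mul_pow, mul_comm])
  have hlim := (((hf.comp_tendsto hline).trans_isBigO hsq).tendsto_div_nhds_zero.mono_left
    (nhdsWithin_le_nhds (s := Ioi 0))).const_mul (-2)
  rw [mul_zero] at hlim
  refine ge_of_tendsto hlim ?_
  filter_upwards [self_mem_nhdsWithin] with t (ht : 0 < t)
  rw [← mul_div_assoc, le_div_iff₀ (by positivity)]
  rw [Function.comp_apply]
  simp only [map_smul, real_inner_smul_left, inner_smul_right]
  have := hle (t • h)
  rw [inner_smul_right] at this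
  linarith

namespace HasParaboloidContact

variable {f : E → ℝ} {C : ℝ}

lemma inner_slope_sub_le {ξ₁ ξ₂ q₁ q₂ : E} (hC : 0 ≤ C) (h₁ : HasParaboloidContact f C ξ₁ q₁)
    (h₂ : HasParaboloidContact f C ξ₂ q₂) (w : E) :
    ⟪q₁ - q₂, w⟫ ≤ 3 * C / 2 * (‖w‖ ^ 2 + ‖ξ₁ - ξ₂‖ ^ 2) := by
  have hbelow := (abs_le.1 (h₁ (ξ₂ + w))).1
  have hmid := (abs_le.1 (h₁ ξ₂)).2
  have habove := (abs_le.1 (h₂ (ξ₂ + w))).2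
  have hshift : ξ₂ + w - ξ₁ = (ξ₂ - ξ₁) + w := by abel
  rw [hshift, inner_add_right] at hbelow
  rw [add_sub_cancel_left] at habove
  rw [norm_sub_rev] at hmid
  have hpar : ‖(ξ₂ - ξ₁) + w‖ ^ 2 ≤ 2 * (‖ξ₁ - ξ₂‖ ^ 2 + ‖w‖ ^ 2) := by
    rw [norm_sub_rev ξ₁]
    exact (pow_le_pow_left₀ (norm_nonneg _) (norm_add_le _ _) 2).trans add_sq_le
  rw [inner_sub_left]
  linarith [mul_le_mul_of_nonneg_left hpar (by positivity : 0 ≤ C / 2)]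

lemma norm_slope_sub_le {ξ₁ ξ₂ q₁ q₂ : E} (hC : 0 < C) (h₁ : HasParaboloidContact f C ξ₁ q₁)
    (h₂ : HasParaboloidContact f C ξ₂ q₂) : ‖q₁ - q₂‖ ≤ 3 * C * ‖ξ₁ - ξ₂‖ := by
  have h := inner_slope_sub_le hC.le h₁ h₂ ((1 / (3 * C)) • (q₁ - q₂))
  rw [inner_smul_right, real_inner_self_eq_norm_sq, norm_smul,
    Real.norm_of_nonneg (by positivity)] at h
  have hsq : ‖q₁ - q₂‖ ^ 2 ≤ (3 * C * ‖ξ₁ - ξ₂‖) ^ 2 := by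
    field_simp at h
    linarith
  exact abs_le_of_sq_le_sq' hsq (by positivity) |>.2

lemma slope_unique {ξ q₁ q₂ : E} (hC : 0 < C) (h₁ : HasParaboloidContact f C ξ q₁)
    (h₂ : HasParaboloidContact f C ξ q₂) : q₁ = q₂ := by
  have h := norm_slope_sub_le hC h₁ h₂
  rwa [sub_self, norm_zero, mul_zero, norm_le_zero_iff, sub_eq_zero] at h

lemma lipschitzOnWith_slope {A : Set E} {q : E → E} (hC : 0 < C)
    (hq : ∀ ξ ∈ A, HasParaboloidContact f C ξ (q ξ)) : LipschitzOnWith (3 * C).toNNReal q A :=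
  .of_dist_le_mul fun ξ hξ ζ hζ => by
    rw [dist_eq_norm, dist_eq_norm, Real.coe_toNNReal _ (by positivity)]
    exact norm_slope_sub_le hC (hq ξ hξ) (hq ζ hζ)

lemma abs_increment_sub_inner_le {ζ p x v : E} (hC : 0 ≤ C) (h : HasParaboloidContact f C ζ p)
    (hζ : ‖ζ - x‖ ≤ ‖v‖) : |f (x + v) - f x - ⟪p, v⟫| ≤ 5 / 2 * C * ‖v‖ ^ 2 := by
  have hstart := h x
  have hend := h (x + v)
  have hshift : x + v - ζ = (x - ζ) + v := by abel
  rw [hshift, inner_add_right] at hend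
  rw [norm_sub_rev] at hζ
  have hnorm : ‖(x - ζ) + v‖ ≤ 2 * ‖v‖ := by linarith [norm_add_le (x - ζ) v]
  have hend' := hend.trans (mul_le_mul_of_nonneg_left
    (pow_le_pow_left₀ (norm_nonneg _) hnorm 2) (by positivity))
  have hstart' := hstart.trans (mul_le_mul_of_nonneg_left
    (pow_le_pow_left₀ (norm_nonneg _) hζ 2) (by positivity))
  rw [abs_le] at *
  constructor <;> linarith

/-- The error of the second-order expansion at `ξ` along the segment from `ξ + s • v` to
`ξ + (s + τ) • v`, as seen from a nearby contact point. -/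
lemma abs_segment_increment_le {q : E → E} {ξ ζ v : E} {X : E →L[ℝ] E} {s τ ε : ℝ}
    (hC : 0 ≤ C) (hτ : 0 ≤ τ) (h : HasParaboloidContact f C ζ (q ζ))
    (hζ : ‖ζ - (ξ + s • v)‖ ≤ τ * ‖v‖) (hX : ‖q ζ - q ξ - X (ζ - ξ)‖ ≤ ε * ‖v‖) :
    |f (ξ + (s + τ) • v) - f (ξ + s • v) - τ * ⟪q ξ, v⟫
        - 1 / 2 * ((s + τ) ^ 2 - s ^ 2) * ⟪X v, v⟫| ≤
      τ * (ε + (3 / 2 * ‖X‖ + 5 / 2 * C) * τ) * ‖v‖ ^ 2 := by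
  set e : E := ζ - (ξ + s • v)
  set w : E := q ζ - q ξ - X (ζ - ξ) with hw
  have hτv : ‖τ • v‖ = τ * ‖v‖ := by rw [norm_smul, Real.norm_of_nonneg hτ]
  have hinc := h.abs_increment_sub_inner_le hC (hζ.trans_eq hτv.symm)
  have hslope : q ζ = q ξ + s • X v + X e + w := by
    have hζξ : ζ - ξ = s • v + e := by simp only [e]; abel
    rw [hw, hζξ, map_add, map_smul]
    abel
  have hXe : |⟪X e, v⟫| ≤ ‖X‖ * (τ * ‖v‖) * ‖v‖ :=
    (abs_real_inner_le_norm _ _).trans (by gcongr; exact X.le_opNorm_of_le hζ)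
  have hwv : |⟪w, v⟫| ≤ ε * ‖v‖ * ‖v‖ := (abs_real_inner_le_norm _ _).trans (by gcongr)
  have hXv : |⟪X v, v⟫| ≤ ‖X‖ * ‖v‖ * ‖v‖ :=
    (abs_real_inner_le_norm _ _).trans (by gcongr; exact X.le_opNorm v)
  rw [add_assoc, ← add_smul, hτv, inner_smul_right, hslope, inner_add_left, inner_add_left,
    inner_add_left, real_inner_smul_left] at hinc
  have hXe' := mul_le_mul_of_nonneg_left hXe hτ
  have hwv' := mul_le_mul_of_nonneg_left hwv hτ
  have hXv' := mul_le_mul_of_nonneg_left hXv (by positivity : 0 ≤ 1 / 2 * τ ^ 2)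
  rw [← abs_of_nonneg hτ, ← abs_mul, abs_of_nonneg hτ] at hXe' hwv'
  rw [← abs_of_nonneg (by positivity : 0 ≤ 1 / 2 * τ ^ 2), ← abs_mul,
    abs_of_nonneg (by positivity : 0 ≤ 1 / 2 * τ ^ 2)] at hXv'
  rw [abs_le] at *
  constructor <;> linarith

/-- Contact points that are `‖v‖ / N`-dense near `ξ` integrate to a second-order expansion: the
segment from `ξ` to `ξ + v` is cut into `N` pieces. -/
lemma abs_expansion_le_of_dense {A : Set E} {q : E → E} {ξ v : E} {X : E →L[ℝ] E} {ε : ℝ} {N : ℕ}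
    (hC : 0 ≤ C) (hN : 0 < N) (hq : ∀ ζ ∈ A, HasParaboloidContact f C ζ (q ζ))
    (hA : ∀ x ∈ closedBall ξ ‖v‖, ∃ ζ ∈ A, ‖ζ - x‖ ≤ 1 / N * ‖v‖)
    (hX : ∀ ζ ∈ A, ‖ζ - ξ‖ ≤ 2 * ‖v‖ → ‖q ζ - q ξ - X (ζ - ξ)‖ ≤ ε * ‖v‖) :
    |f (ξ + v) - f ξ - ⟪q ξ, v⟫ - 1 / 2 * ⟪X v, v⟫| ≤
      (ε + (3 / 2 * ‖X‖ + 5 / 2 * C) * (1 / N)) * ‖v‖ ^ 2 := by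
  have hN₀ : (0 : ℝ) < N := by exact_mod_cast hN
  let D : ℕ → ℝ := fun i => f (ξ + (i / N : ℝ) • v) - i / N * ⟪q ξ, v⟫
    - 1 / 2 * (i / N) ^ 2 * ⟪X v, v⟫
  have hpiece : ∀ {i}, i < N →
      dist (D i) (D (i + 1)) ≤ 1 / N * (ε + (3 / 2 * ‖X‖ + 5 / 2 * C) * (1 / N)) * ‖v‖ ^ 2 := by
    intro i hi
    have hi₁ : (i / N : ℝ) ≤ 1 := div_le_one_of_le₀ (by exact_mod_cast hi.le) hN₀.le
    have hsv : ‖(i / N : ℝ) • v‖ ≤ ‖v‖ := by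
      rw [norm_smul, Real.norm_of_nonneg (by positivity)]
      exact mul_le_of_le_one_left (norm_nonneg v) hi₁
    obtain ⟨ζ, hζA, hζ⟩ := hA (ξ + (i / N : ℝ) • v) (by simpa using hsv)
    have hN₁ : (1 / N : ℝ) ≤ 1 := div_le_one_of_le₀ (by exact_mod_cast hN) hN₀.le
    have hζξ : ‖ζ - ξ‖ ≤ 2 * ‖v‖ := by
      calc ‖ζ - ξ‖ = ‖(ζ - (ξ + (i / N : ℝ) • v)) + (i / N : ℝ) • v‖ := by congr 1; abel
        _ ≤ 1 * ‖v‖ + ‖v‖ := (norm_add_le _ _).trans (by gcongr; exact hζ.trans (by gcongr))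
        _ = 2 * ‖v‖ := by ring
    have hseg := (hq ζ hζA).abs_segment_increment_le hC (by positivity) hζ (hX ζ hζA hζξ)
    rw [dist_comm, Real.dist_eq]
    refine le_of_eq_of_le (congrArg _ ?_) hseg
    simp only [D, Nat.cast_succ, add_div]
    ring
  have htotal := dist_le_range_sum_of_dist_le N hpiece
  rw [Finset.sum_const, Finset.card_range, nsmul_eq_mul, dist_comm, Real.dist_eq] at htotal
  refine (le_of_eq_of_le (congrArg _ ?_) htotal).trans_eq ?_
  · simp only [D, Nat.cast_zero, div_self hN₀.ne', zero_div, zero_smul, one_smul, add_zero]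
    ring
  · field_simp

end HasParaboloidContact

section Alexandrov

variable [FiniteDimensional ℝ E] [MeasurableSpace E] [BorelSpace E]
variable (μ : Measure E) [μ.IsAddHaarMeasure]

open scoped Pointwise in
lemma eventually_dense_closedBall_of_density_one {A : Set E} {ξ : E} {η : ℝ} (hη : 0 < η)
    (hd : Tendsto (fun r => μ (A ∩ closedBall ξ r) / μ (closedBall ξ r)) (𝓝[>] 0) (𝓝 1)) :
    ∀ᶠ r : ℝ in 𝓝[>] 0, ∀ x ∈ closedBall ξ r, ∃ ζ ∈ A, ‖ζ - x‖ ≤ η * r := by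
  obtain ⟨t, -, ht, hcover⟩ :=
    (isCompact_closedBall (0 : E) 1).finite_cover_balls (half_pos hη)
  have hmeet : ∀ᶠ r : ℝ in 𝓝[>] 0, ∀ b ∈ t, (A ∩ ({ξ} + r • ball b (η / 2))).Nonempty :=
    (eventually_all_finite ht).2 fun b _ =>
      Measure.eventually_nonempty_inter_smul_of_density_one μ A ξ hd _ measurableSet_ball
        (measure_ball_pos μ b (half_pos hη)).ne'
  filter_upwards [hmeet, self_mem_nhdsWithin] with r hr (hr₀ : 0 < r) x hx
  obtain ⟨a, ha, rfl⟩ : ∃ a ∈ closedBall (0 : E) 1, ξ + r • a = x := by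
    refine ⟨r⁻¹ • (x - ξ), ?_, by rw [smul_inv_smul₀ hr₀.ne', add_sub_cancel]⟩
    rw [mem_closedBall_zero_iff, norm_smul, norm_inv, Real.norm_of_nonneg hr₀.le,
      inv_mul_le_iff₀ hr₀, mul_one]
    exact mem_closedBall_iff_norm.1 hx
  obtain ⟨b, hb, hab⟩ := mem_iUnion₂.1 (hcover ha)
  obtain ⟨ζ, hζA, hζ⟩ := hr b hb
  rw [singleton_add, mem_image] at hζ
  obtain ⟨_, ⟨c, hc, rfl⟩, rfl⟩ := hζ
  refine ⟨_, hζA, ?_⟩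
  rw [add_sub_add_left_eq_sub, ← smul_sub, norm_smul, Real.norm_of_nonneg hr₀.le, mul_comm]
  gcongr
  rw [← dist_eq_norm]
  rw [mem_ball] at hc hab
  linarith [dist_triangle_right c a b]

variable {f : E → ℝ} {C : ℝ} {A : Set E} {q : E → E}

lemma HasParaboloidContact.hasSecondOrderExpansion {ξ : E} {X : E →L[ℝ] E} (hC : 0 ≤ C)
    (hq : ∀ ζ ∈ A, HasParaboloidContact f C ζ (q ζ)) (hX : HasFDerivWithinAt q X A ξ)
    (hd : Tendsto (fun r => μ (A ∩ closedBall ξ r) / μ (closedBall ξ r)) (𝓝[>] 0) (𝓝 1)) :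
    HasSecondOrderExpansion f ξ (q ξ) X := by
  refine IsLittleO.of_bound fun κ hκ => ?_
  obtain ⟨N, hN⟩ := exists_nat_gt (2 * (3 / 2 * ‖X‖ + 5 / 2 * C) / κ)
  have hN₀ : (0 : ℝ) < N := lt_of_le_of_lt (by positivity) hN
  have hslope : ∀ᶠ r : ℝ in 𝓝[>] 0, ∀ ζ ∈ A, ‖ζ - ξ‖ ≤ 2 * r →
      ‖q ζ - q ξ - X (ζ - ξ)‖ ≤ κ / 2 * r := by
    have := hX.isLittleO.def (by positivity : 0 < κ / 4)
    rw [eventually_nhdsWithin_iff, Metric.eventually_nhds_iff] at this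
    obtain ⟨ε, hε, hball⟩ := this
    filter_upwards [Ioo_mem_nhdsGT (half_pos hε)] with r hr ζ hζ hζr
    calc _ ≤ κ / 4 * ‖ζ - ξ‖ := hball (by rw [dist_eq_norm]; linarith [hr.2]) hζ
      _ ≤ κ / 4 * (2 * r) := by gcongr
      _ = κ / 2 * r := by ring
  have hdense := eventually_dense_closedBall_of_density_one μ (one_div_pos.2 hN₀) hd
  have hboth := tendsto_norm_nhdsNE_zero (E := E) |>.eventually (hslope.and hdense)
  filter_upwards [eventually_nhdsWithin_iff.1 hboth] with v hv
  rcases eq_or_ne v 0 with rfl | hv₀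
  · simp
  obtain ⟨hv_slope, hv_dense⟩ := hv hv₀
  rw [Real.norm_eq_abs, norm_pow, norm_norm]
  refine (abs_expansion_le_of_dense hC (by exact_mod_cast hN₀) hq hv_dense hv_slope).trans ?_
  have hfrac : (3 / 2 * ‖X‖ + 5 / 2 * C) * (1 / N) ≤ κ / 2 := by
    rw [div_lt_iff₀ hκ] at hN
    rw [mul_one_div, div_le_iff₀ hN₀]
    linarith
  gcongr
  linarith

/-- Alexandrov's theorem on a contact set: the slope is Lipschitz, hence differentiable at almost
every point, and almost every point is a density point. -/
lemma HasParaboloidContact.ae_hasSecondOrderExpansion (hC : 0 < C)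
    (hq : ∀ ζ ∈ A, HasParaboloidContact f C ζ (q ζ)) :
    ∀ᵐ ξ ∂μ, ξ ∈ A → ∃ X, HasSecondOrderExpansion f ξ (q ξ) X := by
  filter_upwards [(lipschitzOnWith_slope hC hq).ae_differentiableWithinAt_of_mem (μ := μ),
    ae_imp_of_ae_restrict (Besicovitch.ae_tendsto_measure_inter_div μ A)] with ξ hdiff hdens hξ
  exact ⟨_, hasSecondOrderExpansion μ hC.le hq (hdiff hξ).hasFDerivWithinAt (hdens hξ)⟩

/-- Jensen's lemma: the total slope of `f + g` is a Lipschitz function of the contact point and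
covers a ball, so the contact points are not negligible and Alexandrov's theorem reaches one of
them. -/
lemma HasParaboloidContact.exists_hasSecondOrderExpansion {g : E → ℝ} {ρ : ℝ} {ξ q q' : E → E}
    (hC : 0 < C) (hρ : 0 < ρ) (hsum : ∀ p ∈ ball 0 ρ, q p + q' p = p)
    (hf : ∀ p ∈ ball 0 ρ, HasParaboloidContact f C (ξ p) (q p))
    (hg : ∀ p ∈ ball 0 ρ, HasParaboloidContact g C (ξ p) (q' p)) :
    ∃ p ∈ ball 0 ρ, ∃ X Y, HasSecondOrderExpansion f (ξ p) (q p) X ∧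
      HasSecondOrderExpansion g (ξ p) (q' p) Y := by
  let μ : Measure E := μH[Module.finrank ℝ E]
  let B : Set E := ball 0 ρ
  let P : E → E := Function.invFunOn ξ B
  have hP : ∀ ζ ∈ ξ '' B, P ζ ∈ B ∧ ξ (P ζ) = ζ := fun ζ hζ =>
    ⟨Function.invFunOn_mem hζ, Function.invFunOn_eq hζ⟩
  have hf' : ∀ ζ ∈ ξ '' B, HasParaboloidContact f C ζ (q (P ζ)) := fun ζ hζ => by
    simpa only [(hP ζ hζ).2] using hf _ (hP ζ hζ).1
  have hg' : ∀ ζ ∈ ξ '' B, HasParaboloidContact g C ζ (q' (P ζ)) := fun ζ hζ => by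
    simpa only [(hP ζ hζ).2] using hg _ (hP ζ hζ).1
  have hcover : B ⊆ (fun ζ => q (P ζ) + q' (P ζ)) '' (ξ '' B) := fun p hp => by
    have hξp := mem_image_of_mem ξ hp
    refine ⟨ξ p, hξp, ?_⟩
    simp only [slope_unique hC (hf' _ hξp) (hf p hp), slope_unique hC (hg' _ hξp) (hg p hp),
      hsum p hp]
  have hpos : μ (ξ '' B) ≠ 0 := fun hnull => by
    have hle := ((lipschitzOnWith_slope hC hf').add
      (lipschitzOnWith_slope hC hg')).hausdorffMeasure_image_le (d := Module.finrank ℝ E)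
      (Nat.cast_nonneg _)
    rw [hnull, mul_zero] at hle
    exact (measure_ball_pos μ 0 hρ).not_ge ((measure_mono hcover).trans hle)
  obtain ⟨ζ, hζ, hX, hY⟩ := ((frequently_ae_mem_iff.2 hpos).and_eventually
    ((ae_hasSecondOrderExpansion μ hC hf').and (ae_hasSecondOrderExpansion μ hC hg'))).exists
  obtain ⟨X, hX⟩ := hX hζ
  obtain ⟨Y, hY⟩ := hY hζ
  obtain ⟨hPB, hξP⟩ := hP ζ hζ
  exact ⟨P ζ, hPB, X, Y, hξP.symm ▸ hX, hξP.symm ▸ hY⟩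

end Alexandrov

end Contact

/-! ### Sup-convolutions and doubling of variables -/

section Doubling

variable {E : Type*} [NormedAddCommGroup E] [InnerProductSpace ℝ E]

/-- `(q, X)` lies in the second-order superjet of `u` at `x` relative to `K`: the corresponding
quadratic polynomial bounds `u` from above on `K`, up to `o(‖y - x‖ ^ 2)`. -/
def IsSuperjetWithin (K : Set E) (u : E → ℝ) (x q : E) (X : E →L[ℝ] E) : Prop :=
  ∀ κ > 0, ∀ᶠ y in 𝓝[K] x,
    u y ≤ u x + ⟪q, y - x⟫ + 1 / 2 * ⟪X (y - x), y - x⟫ + κ * ‖y - x‖ ^ 2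

/-- `u` and `w` have superjets at `x` and at `y` whose slopes add up to `p` and whose quadratic
parts add up to a nonpositive form. -/
def HasOpposedSuperjets (K : Set E) (u w : E → ℝ) (x y p : E) : Prop :=
  ∃ q q' X Y, q + q' = p ∧ (∀ h, ⟪X h, h⟫ + ⟪Y h, h⟫ ≤ 0) ∧
    IsSuperjetWithin K u x q X ∧ IsSuperjetWithin K w y q' Y

/-- The functional of the doubling of variables for the maximum of `u + w`, tilted by `p`. -/
def doubled (u w : E → ℝ) (δ : ℝ) (p x y : E) : ℝ :=
  u x + w y - ‖x - y‖ ^ 2 / (4 * δ) - ⟪p, x + y⟫ / 2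

/-- The point `ξ` minimizing `‖ξ - x‖ ^ 2 / (2 * δ) + ‖ξ - y‖ ^ 2 / (2 * δ) + ⟪p, ξ⟫`. -/
def doublingCenter (δ : ℝ) (p x y : E) : E := (1 / 2 : ℝ) • (x + y) - (δ / 2) • p

lemma doubled_eq_add_norm_sub_doublingCenter (u w : E → ℝ) {δ : ℝ} (hδ : 0 < δ) (p x y ξ : E) :
    (u x - ‖ξ - x‖ ^ 2 / (2 * δ)) + (w y - ‖ξ - y‖ ^ 2 / (2 * δ)) =
      doubled u w δ p x y + ⟪p, ξ⟫ + δ / 4 * ‖p‖ ^ 2 - ‖ξ - doublingCenter δ p x y‖ ^ 2 / δ := by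
  simp only [doubled, doublingCenter, ← real_inner_self_eq_norm_sq, inner_sub_left,
    inner_sub_right, inner_add_left, inner_add_right, real_inner_smul_left, inner_smul_right,
    real_inner_comm x ξ, real_inner_comm y ξ, real_inner_comm p ξ, real_inner_comm p x,
    real_inner_comm p y, real_inner_comm y x]
  field_simp
  ring

lemma doubled_comm (u w : E → ℝ) (δ : ℝ) (p x y : E) :
    doubled u w δ p x y = doubled w u δ p y x := by
  rw [doubled, doubled, norm_sub_rev, add_comm (u x), add_comm x]

lemma doublingCenter_comm (δ : ℝ) (p x y : E) :
    doublingCenter δ p x y = doublingCenter δ p y x := by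
  rw [doublingCenter, doublingCenter, add_comm x]

lemma smul_sub_doublingCenter_add {δ : ℝ} (hδ : 0 < δ) (p x y : E) :
    (1 / δ) • (x - doublingCenter δ p x y) + (1 / δ) • (y - doublingCenter δ p x y) = p := by
  rw [doublingCenter, ← smul_add, one_div, inv_smul_eq_iff₀ hδ.ne']
  module

lemma HasParaboloidContact.of_add_le_affine {f g : E → ℝ} {C : ℝ} {ξ q q' : E}
    (hf : ∀ η, f ξ + ⟪q, η - ξ⟫ - C / 2 * ‖η - ξ‖ ^ 2 ≤ f η)
    (hg : ∀ η, g ξ + ⟪q', η - ξ⟫ - C / 2 * ‖η - ξ‖ ^ 2 ≤ g η)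
    (hfg : ∀ η, f η + g η ≤ f ξ + g ξ + ⟪q + q', η - ξ⟫) : HasParaboloidContact f C ξ q := by
  intro η
  have hsum := hfg η
  rw [inner_add_left] at hsum
  rw [abs_le]
  constructor <;> linarith [hf η, hg η]

variable {d : ℕ} {Ω : Set (Eucl d)} {u w : Eucl d → ℝ} {δ : ℝ} {x y p ξ q : Eucl d}

lemma le_supConv (hΩ : Bornology.IsBounded Ω) (hu : ContinuousOn u (closure Ω))
    (hx : x ∈ closure Ω) : u x - ‖ξ - x‖ ^ 2 / (2 * δ) ≤ supConv Ω u δ ξ :=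
  le_csSup (hΩ.isCompact_closure.bddAbove_image (by fun_prop)) (mem_image_of_mem _ hx)

lemma exists_supConv_eq (hΩ : Bornology.IsBounded Ω) (hne : (closure Ω).Nonempty)
    (hu : ContinuousOn u (closure Ω)) :
    ∃ x ∈ closure Ω, supConv Ω u δ ξ = u x - ‖ξ - x‖ ^ 2 / (2 * δ) :=
  hΩ.isCompact_closure.exists_sSup_image_eq hne (by fun_prop)

lemma supConv_eq_of_forall_le (hx : x ∈ closure Ω)
    (hmax : ∀ y ∈ closure Ω, u y - ‖ξ - y‖ ^ 2 / (2 * δ) ≤ u x - ‖ξ - x‖ ^ 2 / (2 * δ)) :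
    supConv Ω u δ ξ = u x - ‖ξ - x‖ ^ 2 / (2 * δ) :=
  IsGreatest.csSup_eq ⟨mem_image_of_mem _ hx, forall_mem_image.2 hmax⟩

lemma paraboloid_le_supConv (hΩ : Bornology.IsBounded Ω) (hu : ContinuousOn u (closure Ω))
    (hx : x ∈ closure Ω) (hξ : supConv Ω u δ ξ = u x - ‖ξ - x‖ ^ 2 / (2 * δ)) (η : Eucl d) :
    supConv Ω u δ ξ + ⟪(1 / δ) • (x - ξ), η - ξ⟫ - 1 / δ / 2 * ‖η - ξ‖ ^ 2 ≤ supConv Ω u δ η := by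
  refine le_of_eq_of_le ?_ (le_supConv hΩ hu hx)
  have hsplit : η - x = (η - ξ) - (x - ξ) := by abel
  rw [hξ, hsplit, norm_sub_sq_real (η - ξ), norm_sub_rev ξ x, real_inner_smul_left,
    real_inner_comm (x - ξ)]
  ring

lemma HasSecondOrderExpansion.isSuperjetWithin_of_supConv {X : Eucl d →L[ℝ] Eucl d}
    (hΩ : Bornology.IsBounded Ω) (hu : ContinuousOn u (closure Ω))
    (hξ : supConv Ω u δ ξ = u x - ‖ξ - x‖ ^ 2 / (2 * δ))
    (hexp : HasSecondOrderExpansion (supConv Ω u δ) ξ q X) :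
    IsSuperjetWithin (closure Ω) u x q X := by
  intro κ hκ
  have hshift : Tendsto (fun y => y - x) (𝓝[closure Ω] x) (𝓝 0) :=
    ((continuous_sub_right x).tendsto' x 0 (sub_self x)).mono_left nhdsWithin_le_nhds
  filter_upwards [hshift.eventually (hexp.def hκ), self_mem_nhdsWithin] with y hy hyΩ
  rw [norm_pow, norm_norm] at hy
  have hle := le_supConv (δ := δ) (ξ := ξ + (y - x)) hΩ hu hyΩ
  have hcancel : ξ + (y - x) - y = ξ - x := by abel
  rw [hcancel] at hle
  linarith [(abs_le.1 hy).2]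

lemma supConv_eq_of_doubled_max (hδ : 0 < δ) (hx : x ∈ closure Ω)
    (hmax : ∀ x' ∈ closure Ω, doubled u w δ p x' y ≤ doubled u w δ p x y) :
    supConv Ω u δ (doublingCenter δ p x y) =
      u x - ‖doublingCenter δ p x y - x‖ ^ 2 / (2 * δ) := by
  refine supConv_eq_of_forall_le hx fun x' hx' => ?_
  have hcenter := doubled_eq_add_norm_sub_doublingCenter u w hδ p x y (doublingCenter δ p x y)
  have hother := doubled_eq_add_norm_sub_doublingCenter u w hδ p x' y (doublingCenter δ p x y)
  have hsq : 0 ≤ ‖doublingCenter δ p x y - doublingCenter δ p x' y‖ ^ 2 / δ := by positivity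
  rw [sub_self, norm_zero, zero_pow two_ne_zero, zero_div] at hcenter
  linarith [hmax x' hx']

lemma supConv_eq_of_doubled_max_right (hδ : 0 < δ) (hy : y ∈ closure Ω)
    (hmax : ∀ y' ∈ closure Ω, doubled u w δ p x y' ≤ doubled u w δ p x y) :
    supConv Ω w δ (doublingCenter δ p x y) =
      w y - ‖doublingCenter δ p x y - y‖ ^ 2 / (2 * δ) := by
  rw [doublingCenter_comm]
  refine supConv_eq_of_doubled_max (w := u) hδ hy fun y' hy' => ?_
  simpa only [doubled_comm u w] using hmax y' hy'

lemma supConv_add_supConv_le_of_doubled_max (hΩ : Bornology.IsBounded Ω)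
    (hu : ContinuousOn u (closure Ω)) (hw : ContinuousOn w (closure Ω)) (hδ : 0 < δ)
    (hx : x ∈ closure Ω) (hy : y ∈ closure Ω)
    (hmax : ∀ x' ∈ closure Ω, ∀ y' ∈ closure Ω, doubled u w δ p x' y' ≤ doubled u w δ p x y)
    (η : Eucl d) :
    supConv Ω u δ η + supConv Ω w δ η ≤
      supConv Ω u δ (doublingCenter δ p x y) + supConv Ω w δ (doublingCenter δ p x y) +
        ⟪p, η - doublingCenter δ p x y⟫ := by
  obtain ⟨x', hx', hux'⟩ := exists_supConv_eq (δ := δ) (ξ := η) hΩ ⟨x, hx⟩ hu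
  obtain ⟨y', hy', hwy'⟩ := exists_supConv_eq (δ := δ) (ξ := η) hΩ ⟨x, hx⟩ hw
  have hη := doubled_eq_add_norm_sub_doublingCenter u w hδ p x' y' η
  have hcenter := doubled_eq_add_norm_sub_doublingCenter u w hδ p x y (doublingCenter δ p x y)
  rw [sub_self, norm_zero, zero_pow two_ne_zero, zero_div] at hcenter
  have hsq : 0 ≤ ‖η - doublingCenter δ p x' y'‖ ^ 2 / δ := by positivity
  rw [hux', hwy', inner_sub_right]
  linarith [hmax x' hx' y' hy', le_supConv (ξ := doublingCenter δ p x y) (δ := δ) hΩ hu hx,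
    le_supConv (ξ := doublingCenter δ p x y) (δ := δ) hΩ hw hy]

lemma exists_doubled_max (hΩ : Bornology.IsBounded Ω) (hne : (closure Ω).Nonempty)
    (hu : ContinuousOn u (closure Ω)) (hw : ContinuousOn w (closure Ω)) (δ : ℝ) (p : Eucl d) :
    ∃ x ∈ closure Ω, ∃ y ∈ closure Ω, ∀ x' ∈ closure Ω, ∀ y' ∈ closure Ω,
      doubled u w δ p x' y' ≤ doubled u w δ p x y := by
  have hcont : ContinuousOn (fun z : Eucl d × Eucl d => doubled u w δ p z.1 z.2)
      (closure Ω ×ˢ closure Ω) := by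
    have hu' := hu.comp continuousOn_fst fun z (hz : z ∈ closure Ω ×ˢ closure Ω) => hz.1
    have hw' := hw.comp continuousOn_snd fun z (hz : z ∈ closure Ω ×ˢ closure Ω) => hz.2
    unfold doubled
    exact ((hu'.add hw').sub (by fun_prop)).sub (by fun_prop)
  obtain ⟨z, hz, hmax⟩ := (hΩ.isCompact_closure.prod hΩ.isCompact_closure).exists_isMaxOn
    (hne.prod hne) hcont
  exact ⟨z.1, hz.1, z.2, hz.2, fun x' hx' y' hy' => hmax (mk_mem_prod hx' hy')⟩

lemma exists_opposed_superjets_of_doubled_max (hΩ : Bornology.IsBounded Ω)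
    (hne : (closure Ω).Nonempty) (hu : ContinuousOn u (closure Ω))
    (hw : ContinuousOn w (closure Ω)) {ρ : ℝ} (hδ : 0 < δ) (hρ : 0 < ρ) :
    ∃ p ∈ ball (0 : Eucl d) ρ, ∃ x ∈ closure Ω, ∃ y ∈ closure Ω,
      (∀ x' ∈ closure Ω, ∀ y' ∈ closure Ω, doubled u w δ p x' y' ≤ doubled u w δ p x y) ∧
        HasOpposedSuperjets (closure Ω) u w x y p := by
  choose x hx y hy hmax using exists_doubled_max hΩ hne hu hw δ
  let ξ : Eucl d → Eucl d := fun p => doublingCenter δ p (x p) (y p)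
  let q : Eucl d → Eucl d := fun p => (1 / δ) • (x p - ξ p)
  let q' : Eucl d → Eucl d := fun p => (1 / δ) • (y p - ξ p)
  have hqq' : ∀ p, q p + q' p = p := fun p => smul_sub_doublingCenter_add hδ p (x p) (y p)
  have hux : ∀ p, supConv Ω u δ (ξ p) = u (x p) - ‖ξ p - x p‖ ^ 2 / (2 * δ) := fun p =>
    supConv_eq_of_doubled_max hδ (hx p) fun x' hx' => hmax p x' hx' (y p) (hy p)
  have hwy : ∀ p, supConv Ω w δ (ξ p) = w (y p) - ‖ξ p - y p‖ ^ 2 / (2 * δ) := fun p =>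
    supConv_eq_of_doubled_max_right hδ (hy p) (hmax p (x p) (hx p))
  have hlow_u := fun p => paraboloid_le_supConv hΩ hu (hx p) (hux p)
  have hlow_w := fun p => paraboloid_le_supConv hΩ hw (hy p) (hwy p)
  have hup : ∀ p η, supConv Ω u δ η + supConv Ω w δ η ≤
      supConv Ω u δ (ξ p) + supConv Ω w δ (ξ p) + ⟪q p + q' p, η - ξ p⟫ := fun p η => by
    rw [hqq']
    exact supConv_add_supConv_le_of_doubled_max hΩ hu hw hδ (hx p) (hy p) (hmax p) η
  obtain ⟨p, hp, X, Y, hX, hY⟩ := HasParaboloidContact.exists_hasSecondOrderExpansion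
    (one_div_pos.2 hδ) hρ (fun p _ => hqq' p)
    (fun p _ => .of_add_le_affine (hlow_u p) (hlow_w p) (hup p))
    (fun p _ => .of_add_le_affine (hlow_w p) (hlow_u p) fun η => by
      simpa only [add_comm] using hup p η)
  refine ⟨p, hp, x p, hx p, y p, hy p, hmax p, q p, q' p, X, Y, hqq' p, fun h => ?_,
    hX.isSuperjetWithin_of_supConv hΩ hu (hux p), hY.isSuperjetWithin_of_supConv hΩ hw (hwy p)⟩
  have hXY := (hX.add hY).inner_self_nonpos (fun h => by
    simpa only [add_sub_cancel_left] using hup p (ξ p + h)) h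
  rwa [add_apply, inner_add_left] at hXY

lemma norm_sub_sq_le_of_doubled_max {M : ℝ} (hδ : 0 < δ) (hx : x ∈ closure Ω) (hy : y ∈ closure Ω)
    (hdiag : doubled u w δ p x x ≤ doubled u w δ p x y)
    (hw : ∀ z ∈ closure Ω, |w z| ≤ M) (hp : |⟪p, x - y⟫| ≤ 2 * M) :
    ‖x - y‖ ^ 2 ≤ 12 * M * δ := by
  simp only [doubled, sub_self, norm_zero, zero_pow two_ne_zero, zero_div, inner_add_right] at hdiag
  rw [inner_sub_right] at hp
  have hdiv : ‖x - y‖ ^ 2 / (4 * δ) ≤ 3 * M := by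
    linarith [(abs_le.1 hp).2, (abs_le.1 (hw y hy)).2, (abs_le.1 (hw x hx)).1]
  rw [div_le_iff₀ (by positivity)] at hdiv
  linarith

lemma tendsto_sub_of_doubled_max {x y p : ℕ → Eucl d} {δ : ℕ → ℝ} (hΩ : Bornology.IsBounded Ω)
    (hw : ContinuousOn w (closure Ω)) (hδ : ∀ n, 0 < δ n) (hδ_lim : Tendsto δ atTop (𝓝 0))
    (hp : ∀ n, ‖p n‖ ≤ 1) (hx : ∀ n, x n ∈ closure Ω) (hy : ∀ n, y n ∈ closure Ω)
    (hdiag : ∀ n, ∀ z ∈ closure Ω,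
      doubled u w (δ n) (p n) z z ≤ doubled u w (δ n) (p n) (x n) (y n)) :
    Tendsto (fun n => y n - x n) atTop (𝓝 0) := by
  obtain ⟨Mw, hMw⟩ := hΩ.isCompact_closure.exists_bound_of_continuousOn hw
  obtain ⟨R, hR⟩ := hΩ.isCompact_closure.exists_bound_of_continuousOn continuousOn_id
  have hxy : ∀ n, ‖x n - y n‖ ^ 2 ≤ 12 * max Mw R * δ n := fun n => by
    refine norm_sub_sq_le_of_doubled_max (hδ n) (hx n) (hy n) (hdiag n (x n) (hx n))
      (fun z hz => (hMw z hz).trans (le_max_left _ _)) ?_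
    calc |⟪p n, x n - y n⟫| ≤ ‖p n‖ * ‖x n - y n‖ := abs_real_inner_le_norm _ _
      _ ≤ 1 * (R + R) := by
        gcongr
        exacts [hp n, norm_sub_le_of_le (hR _ (hx n)) (hR _ (hy n))]
      _ ≤ 2 * max Mw R := by linarith [le_max_right Mw R]
  have hsq := squeeze_zero (fun n => sq_nonneg _) hxy
    (by simpa only [mul_zero] using hδ_lim.const_mul (12 * max Mw R))
  rw [tendsto_zero_iff_norm_tendsto_zero]
  simpa only [norm_sub_rev, Real.sqrt_sq (norm_nonneg _), Real.sqrt_zero] using hsq.sqrt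

lemma isMaxOn_add_of_tendsto_doubled_max {x y p : ℕ → Eucl d} {δ : ℕ → ℝ} {a : Eucl d}
    (hu : ContinuousWithinAt u (closure Ω) a) (hw : ContinuousWithinAt w (closure Ω) a)
    (hδ : ∀ n, 0 < δ n) (hx : ∀ n, x n ∈ closure Ω) (hy : ∀ n, y n ∈ closure Ω)
    (hmax : ∀ n, ∀ z ∈ closure Ω, doubled u w (δ n) (p n) z z ≤ doubled u w (δ n) (p n) (x n) (y n))
    (hxa : Tendsto x atTop (𝓝 a)) (hya : Tendsto y atTop (𝓝 a)) (hp : Tendsto p atTop (𝓝 0)) :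
    IsMaxOn (fun z => u z + w z) (closure Ω) a := by
  intro z hz
  have hux := hu.tendsto.comp (tendsto_nhdsWithin_iff.2 ⟨hxa, .of_forall hx⟩)
  have hwy := hw.tendsto.comp (tendsto_nhdsWithin_iff.2 ⟨hya, .of_forall hy⟩)
  have hleft : Tendsto (fun n => u z + w z - ⟪p n, z⟫) atTop (𝓝 (u z + w z - ⟪0, z⟫)) :=
    tendsto_const_nhds.sub (hp.inner tendsto_const_nhds)
  have hright : Tendsto (fun n => u (x n) + w (y n) - ⟪p n, x n + y n⟫ / 2) atTop
      (𝓝 (u a + w a - ⟪0, a + a⟫ / 2)) :=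
    (hux.add hwy).sub ((hp.inner (hxa.add hya)).div_const 2)
  have hlim := le_of_tendsto_of_tendsto' hleft hright fun n => by
    have hn := hmax n z hz
    have hpen : 0 ≤ ‖x n - y n‖ ^ 2 / (4 * δ n) := by have := hδ n; positivity
    simp only [doubled, sub_self, norm_zero, zero_pow two_ne_zero, zero_div,
      inner_add_right (p n) z z] at hn
    linarith
  simpa only [inner_zero_left, zero_div, sub_zero, mem_ofPred_eq] using hlim

/-- The form of the theorem on sums used for the comparison principle. -/
lemma exists_opposed_superjets_tendsto_max (hΩ : Bornology.IsBounded Ω)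
    (hne : (closure Ω).Nonempty) (hu : ContinuousOn u (closure Ω))
    (hw : ContinuousOn w (closure Ω)) :
    ∃ a ∈ closure Ω, IsMaxOn (fun z => u z + w z) (closure Ω) a ∧
      ∃ x y p : ℕ → Eucl d, (∀ n, x n ∈ closure Ω) ∧ (∀ n, y n ∈ closure Ω) ∧
        Tendsto x atTop (𝓝 a) ∧ Tendsto y atTop (𝓝 a) ∧ Tendsto p atTop (𝓝 0) ∧
        ∀ n, HasOpposedSuperjets (closure Ω) u w (x n) (y n) (p n) := by
  have hδ : ∀ n : ℕ, 0 < 1 / ((n : ℝ) + 1) := fun n => by positivity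
  choose p hp x hx y hy hmax hjet using fun n : ℕ =>
    exists_opposed_superjets_of_doubled_max hΩ hne hu hw (hδ n) (hδ n)
  have hδ_lim := tendsto_one_div_add_atTop_nhds_zero_nat (𝕜 := ℝ)
  have hp_lim : Tendsto p atTop (𝓝 0) := squeeze_zero_norm
    (fun n => (mem_ball_zero_iff.1 (hp n)).le) hδ_lim
  have hp_one : ∀ n, ‖p n‖ ≤ 1 := fun n => (mem_ball_zero_iff.1 (hp n)).le.trans
    (div_le_one_of_le₀ (by linarith [n.cast_nonneg (α := ℝ)]) (by positivity))
  have hxy := tendsto_sub_of_doubled_max hΩ hw hδ hδ_lim hp_one hx hy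
    fun n z hz => hmax n z hz z hz
  obtain ⟨a, ha, φ, hφ, hxa⟩ := hΩ.isCompact_closure.tendsto_subseq hx
  have hya : Tendsto (y ∘ φ) atTop (𝓝 a) := by
    simpa [Function.comp_def] using hxa.add (hxy.comp hφ.tendsto_atTop)
  have hpφ := hp_lim.comp hφ.tendsto_atTop
  refine ⟨a, ha, ?_, x ∘ φ, y ∘ φ, p ∘ φ, fun n => hx _, fun n => hy _, hxa, hya, hpφ,
    fun n => hjet _⟩
  exact isMaxOn_add_of_tendsto_doubled_max (hu a ha) (hw a ha) (fun n => hδ (φ n))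
    (fun n => hx _) (fun n => hy _) (fun n z hz => hmax (φ n) z hz z hz) hxa hya hpφ

end Doubling

/-! ### Second-order test functions -/

section TestFunctions

variable {d : ℕ} {Ω : Set (Eucl d)} {G : Matrix (Fin d) (Fin d) ℝ → Eucl d → ℝ → Eucl d → ℝ}
  {g u v : Eucl d → ℝ}

open scoped Matrix

/-- The matrix of the symmetric part of an operator in the standard basis. -/
def symmMatrix : (Eucl d →L[ℝ] Eucl d) →ₗ[ℝ] Matrix (Fin d) (Fin d) ℝ where
  toFun X := (1 / 2 : ℝ) • ((Matrix.toEuclideanCLM (n := Fin d) (𝕜 := ℝ)).symm X +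
    ((Matrix.toEuclideanCLM (n := Fin d) (𝕜 := ℝ)).symm X)ᵀ)
  map_add' X Y := by
    rw [map_add, Matrix.transpose_add]
    module
  map_smul' c X := by
    rw [map_smul, Matrix.transpose_smul, RingHom.id_apply]
    module

lemma symmMatrix_toEuclideanCLM (A : Matrix (Fin d) (Fin d) ℝ) :
    symmMatrix (Matrix.toEuclideanCLM (𝕜 := ℝ) A) = (1 / 2 : ℝ) • (A + Aᵀ) := by
  simp only [symmMatrix, LinearMap.coe_mk, AddHom.coe_mk, StarAlgEquiv.symm_apply_apply]

lemma exists_toEuclideanCLM_eq (X : Eucl d →L[ℝ] Eucl d) :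
    ∃ A : Matrix (Fin d) (Fin d) ℝ, Matrix.toEuclideanCLM (𝕜 := ℝ) A = X :=
  ⟨_, StarAlgEquiv.apply_symm_apply _ X⟩

lemma symmMatrix_apply (X : Eucl d →L[ℝ] Eucl d) (i j : Fin d) :
    symmMatrix X i j =
      1 / 2 * (X (EuclideanSpace.single i 1) j + X (EuclideanSpace.single j 1) i) := by
  obtain ⟨A, rfl⟩ := exists_toEuclideanCLM_eq X
  rw [symmMatrix_toEuclideanCLM]
  simp [EuclideanSpace.single, add_comm]

lemma symmMatrix_isSymm (X : Eucl d →L[ℝ] Eucl d) : (symmMatrix X).IsSymm :=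
  (Matrix.isSymm_add_transpose_self _).smul _

lemma symmMatrix_id : symmMatrix (ContinuousLinearMap.id ℝ (Eucl d)) = 1 := by
  rw [← ContinuousLinearMap.one_def, ← map_one (Matrix.toEuclideanCLM (n := Fin d) (𝕜 := ℝ)),
    symmMatrix_toEuclideanCLM, Matrix.transpose_one]
  module

lemma symmMatrix_posSemidef {X : Eucl d →L[ℝ] Eucl d} (hX : ∀ h, 0 ≤ ⟪X h, h⟫) :
    (symmMatrix X).PosSemidef := by
  refine .of_dotProduct_mulVec_nonneg (symmMatrix_isSymm X) fun x => ?_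
  have hx := hX (WithLp.toLp 2 x)
  obtain ⟨A, rfl⟩ := exists_toEuclideanCLM_eq X
  rw [Matrix.toEuclideanCLM_toLp, EuclideanSpace.inner_toLp_toLp, star_trivial] at hx
  rw [symmMatrix_toEuclideanCLM, Matrix.smul_mulVec, Matrix.add_mulVec, dotProduct_smul,
    dotProduct_add, star_trivial, Matrix.dotProduct_transpose_mulVec, smul_eq_mul]
  linarith [dotProduct_comm (A *ᵥ x) x]

/-- The quadratic polynomial with gradient `q` at `a` whose Hessian is the symmetric part of `X`. -/
def quadTest (a q : Eucl d) (X : Eucl d →L[ℝ] Eucl d) (x : Eucl d) : ℝ :=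
  ⟪q, x - a⟫ + 1 / 2 * ⟪X (x - a), x - a⟫

lemma quadTest_contDiff (a q : Eucl d) (X : Eucl d →L[ℝ] Eucl d) :
    ContDiff ℝ 2 (quadTest a q X) := by
  have hsub : ContDiff ℝ 2 (fun x : Eucl d => x - a) := contDiff_id.sub contDiff_const
  exact (contDiff_const.inner ℝ hsub).add
    (contDiff_const.mul ((X.contDiff.comp hsub).inner ℝ hsub))

lemma fderiv_quadTest (a q : Eucl d) (X : Eucl d →L[ℝ] Eucl d) (x w : Eucl d) :
    fderiv ℝ (quadTest a q X) x w = ⟪q, w⟫ + 1 / 2 * (⟪X (x - a), w⟫ + ⟪X w, x - a⟫) := by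
  have hsub := (hasFDerivAt_id (𝕜 := ℝ) x).sub_const a
  have hquad : HasFDerivAt (quadTest a q X) _ x :=
    ((hasFDerivAt_const q x).inner ℝ hsub).add
      (((X.hasFDerivAt.comp x hsub).inner ℝ hsub).const_mul (1 / 2))
  rw [hquad.fderiv]
  simp

lemma gradAt_quadTest (a q : Eucl d) (X : Eucl d →L[ℝ] Eucl d) :
    gradAt (quadTest a q X) a = q := by
  ext i
  simp [gradAt, fderiv_quadTest, EuclideanSpace.inner_single_right]

lemma hessAt_quadTest (a q : Eucl d) (X : Eucl d →L[ℝ] Eucl d) :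
    hessAt (quadTest a q X) a = symmMatrix X := by
  ext i j
  simp only [hessAt, Matrix.of_apply, fderiv_quadTest, symmMatrix_apply]
  set e : Eucl d := EuclideanSpace.single j (1 : ℝ)
  have hsub := (hasFDerivAt_id (𝕜 := ℝ) a).sub_const a
  have haffine : HasFDerivAt (fun y => ⟪q, e⟫ + 1 / 2 * (⟪X (y - a), e⟫ + ⟪X e, y - a⟫)) _ a :=
    ((((X.hasFDerivAt.comp a hsub).inner ℝ (hasFDerivAt_const e a)).add
      ((hasFDerivAt_const (X e) a).inner ℝ hsub)).const_mul (1 / 2)).const_add ⟪q, e⟫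
  rw [haffine.fderiv]
  simp [e, EuclideanSpace.inner_single_right, mul_add]

lemma gradAt_neg (φ : Eucl d → ℝ) (x : Eucl d) : gradAt (fun y => -φ y) x = -gradAt φ x := by
  ext i
  simp [gradAt, fderiv_fun_neg]

lemma hessAt_neg (φ : Eucl d → ℝ) (x : Eucl d) : hessAt (fun y => -φ y) x = -hessAt φ x := by
  ext i j
  simp [hessAt, fderiv_fun_neg]

lemma ViscSupersol.neg (hv : ViscSupersol Ω G g v) :
    ViscSubsol Ω (fun M P r x => -G (-M) (-P) (-r) x) (fun x => -g x) (fun x => -v x) := by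
  intro x hx φ hφ hmax
  have hmin : IsLocalMin (fun y => v y - -φ y) x := by
    simpa only [neg_sub, sub_neg_eq_add, neg_add_rev, neg_neg, add_comm] using hmax.neg
  simpa only [hessAt_neg, gradAt_neg, neg_neg] using neg_le_neg (hv x hx _ hφ.neg hmin)

lemma ViscSubsol.le_of_isSuperjetWithin {K : Set (Eucl d)} {x q : Eucl d}
    {X : Eucl d →L[ℝ] Eucl d} {κ : ℝ} (hu : ViscSubsol Ω G g u) (hx : x ∈ Ω) (hK : K ∈ 𝓝 x)
    (hjet : IsSuperjetWithin K u x q X) (hκ : 0 < κ) :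
    G (symmMatrix X + (2 * κ) • 1) q (u x) x ≤ g x := by
  have hmax : IsLocalMax
      (fun y => u y - quadTest x q (X + (2 * κ) • ContinuousLinearMap.id ℝ (Eucl d)) y) x := by
    filter_upwards [nhdsWithin_eq_nhds.2 hK ▸ hjet κ hκ] with y hy
    simp only [quadTest, sub_self, map_zero, inner_zero_right, add_apply, inner_add_left,
      smul_apply, ContinuousLinearMap.id_apply, real_inner_smul_left,
      real_inner_self_eq_norm_sq]
    linarith
  have := hu x hx _ (quadTest_contDiff _ _ _).contDiffAt hmax
  rwa [hessAt_quadTest, gradAt_quadTest, map_add, map_smul, symmMatrix_id] at this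

lemma ViscSupersol.le_of_isSuperjetWithin_neg {K : Set (Eucl d)} {x q : Eucl d}
    {X : Eucl d →L[ℝ] Eucl d} {κ : ℝ} (hv : ViscSupersol Ω G g v) (hx : x ∈ Ω) (hK : K ∈ 𝓝 x)
    (hjet : IsSuperjetWithin K (fun y => -v y) x q X) (hκ : 0 < κ) :
    g x ≤ G (-(symmMatrix X + (2 * κ) • 1)) (-q) (v x) x := by
  simpa only [neg_neg, neg_le_neg_iff] using hv.neg.le_of_isSuperjetWithin hx hK hjet hκ

lemma ViscSubsol.le_of_frontier_le {c : ℝ} (hu : ViscSubsol Ω G g u) (hΩ : IsOpen Ω)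
    (hbd : Bornology.IsBounded Ω) (hcont : ContinuousOn u (closure Ω))
    (hfrontier : ∀ x ∈ frontier Ω, u x ≤ c)
    (hG : ∀ x ∈ Ω, ∀ r > c, g x < G 0 0 r x) : ∀ x ∈ closure Ω, u x ≤ c := by
  intro x hx
  obtain ⟨a, ha, hmax⟩ := hbd.isCompact_closure.exists_isMaxOn ⟨x, hx⟩ hcont
  refine (hmax hx).trans (le_of_not_gt fun hca => ?_)
  have haΩ : a ∈ Ω := by
    by_contra haΩ
    exact hca.not_ge (hfrontier a (hΩ.frontier_eq ▸ ⟨ha, haΩ⟩))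
  have hloc : IsLocalMax (fun y => u y - (fun _ => 0) y) a := by
    simpa only [sub_zero] using hmax.isLocalMax
      (mem_of_superset (hΩ.mem_nhds haΩ) subset_closure)
  have hvisc := hu a haΩ _ contDiffAt_const hloc
  have hgrad : gradAt (fun _ : Eucl d => (0 : ℝ)) a = 0 := by
    ext i
    simp [gradAt]
  have hhess : hessAt (fun _ : Eucl d => (0 : ℝ)) a = 0 := by
    ext i j
    simp [hessAt]
  rw [hgrad, hhess] at hvisc
  exact hvisc.not_gt (hG a haΩ _ hca)

end TestFunctions

/-! ### Proper operators and comparison -/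

section Comparison

variable {d : ℕ} {Ω : Set (Eucl d)} {lam Lam gam : ℝ}

lemma specNorm_nonneg (M : Matrix (Fin d) (Fin d) ℝ) : 0 ≤ specNorm M :=
  Real.iSup_nonneg fun _ => abs_nonneg _

lemma specNorm_smul_one_le {c : ℝ} (hc : 0 ≤ c) :
    specNorm (c • (1 : Matrix (Fin d) (Fin d) ℝ)) ≤ c := by
  have hherm : (c • (1 : Matrix (Fin d) (Fin d) ℝ)).IsHermitian := by simp [Matrix.IsHermitian]
  refine Real.iSup_le (fun i => ?_) hc
  have : Nonempty (Fin d) := ⟨i⟩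
  have heig : hherm.eigenvalues i = c := by
    simpa only [← Algebra.algebraMap_eq_smul_one, spectrum.scalar_eq, mem_singleton_iff] using
      hherm.eigenvalues_mem_spectrum_real i
  rw [eigs, dif_pos hherm, heig, abs_of_nonneg hc]

lemma pucciMinus_zero (lam Lam : ℝ) : pucciMinus lam Lam (0 : Matrix (Fin d) (Fin d) ℝ) = 0 := by
  have heigs : eigs (0 : Matrix (Fin d) (Fin d) ℝ) = 0 := by
    rw [eigs, dif_pos Matrix.isHermitian_zero]
    exact Matrix.isHermitian_zero.eigenvalues_eq_zero_iff.2 rfl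
  simp [pucciMinus, posPartTrace, negPartTrace, heigs]

/-- A degenerate elliptic operator on `K`: nonincreasing in the Hessian and Lipschitz, with constant
`Lam`, along the identity matrix; nondecreasing in the value and `gam`-Lipschitz in the gradient. -/
structure ProperOperator (Lam gam : ℝ) (K : Set (Eucl d))
    (G : Matrix (Fin d) (Fin d) ℝ → Eucl d → ℝ → Eucl d → ℝ) : Prop where
  add_posSemidef_le : ∀ {M N : Matrix (Fin d) (Fin d) ℝ}, M.IsSymm → N.PosSemidef →
    ∀ (P : Eucl d) (r : ℝ), ∀ x ∈ K, G (M + N) P r x ≤ G M P r x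
  le_add_smul_one : ∀ {M : Matrix (Fin d) (Fin d) ℝ}, M.IsSymm → ∀ {c : ℝ}, 0 ≤ c →
    ∀ (P : Eucl d) (r : ℝ), ∀ x ∈ K, G M P r x ≤ G (M + c • 1) P r x + Lam * c
  le_of_value_le : ∀ {M : Matrix (Fin d) (Fin d) ℝ}, M.IsSymm → ∀ (P Q : Eucl d) {r s : ℝ},
    s ≤ r → ∀ x ∈ K, G M Q s x ≤ G M P r x + gam * ‖P - Q‖

lemma UniformlyElliptic.properOperator {K : Set (Eucl d)} {S : Set ℝ} {ω : ℝ → ℝ → ℝ}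
    {F : Matrix (Fin d) (Fin d) ℝ → Eucl d → ℝ → Eucl d → ℝ → ℝ} {t : ℝ}
    (hF : UniformlyElliptic lam Lam K S F) (hF' : StructureCondition lam Lam gam ω K S F)
    (hlam : 0 ≤ lam) (hLam : 0 ≤ Lam) (ht : t ∈ S) :
    ProperOperator Lam gam K fun M P r x => F M P r x t where
  add_posSemidef_le {_ N} hM hN P r x hx := by
    linarith [(hF _ _ hM hN P r x hx t ht).2, mul_nonneg hlam (specNorm_nonneg N)]
  le_add_smul_one hM c hc P r x hx := by
    have hbound := (hF _ _ hM (Matrix.PosSemidef.one.smul hc) P r x hx t ht).1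
    linarith [mul_le_mul_of_nonneg_left (specNorm_smul_one_le (d := d) hc) hLam]
  le_of_value_le {M} hM P Q r s hsr x hx := by
    have hR : 0 < |r| + |s| + 1 := by positivity
    have hbound := (hF'.2 _ hR M M hM hM P Q r s (by linarith [abs_nonneg s])
      (by linarith [abs_nonneg r]) x hx t ht).1
    rw [sub_self, pucciMinus_zero, max_eq_right (sub_nonpos.2 hsr), (hF'.1 _ hR).2.2] at hbound
    linarith

variable {G G₁ G₂ : Matrix (Fin d) (Fin d) ℝ → Eucl d → ℝ → Eucl d → ℝ}
  {f g u v : Eucl d → ℝ} {σ : ℝ → ℝ} {h τ B : ℝ}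

lemma ProperOperator.le_of_add_nonpos {K : Set (Eucl d)} (hG : ProperOperator Lam gam K G)
    {X Y : Eucl d →L[ℝ] Eucl d} (hXY : ∀ h, ⟪X h, h⟫ + ⟪Y h, h⟫ ≤ 0) {κ : ℝ} (hκ : 0 ≤ κ)
    (q q' : Eucl d) {r s : ℝ} (hsr : s ≤ r) {x : Eucl d} (hx : x ∈ K) :
    G (-(symmMatrix Y + (2 * κ) • 1)) (-q') s x ≤
      G (symmMatrix X + (2 * κ) • 1) q r x + gam * ‖q + q'‖ + Lam * (4 * κ) := by
  have hone : ((2 * κ) • (1 : Matrix (Fin d) (Fin d) ℝ)).IsSymm := Matrix.isSymm_one.smul _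
  have hM : (-(symmMatrix Y + (2 * κ) • 1)).IsSymm := ((symmMatrix_isSymm Y).add hone).neg
  have hN : (symmMatrix (-(X + Y))).PosSemidef := symmMatrix_posSemidef fun h => by
    simp only [neg_apply, add_apply, inner_neg_left, inner_add_left]
    linarith [hXY h]
  have hsum : -(symmMatrix Y + (2 * κ) • 1) + (4 * κ) • 1 =
      symmMatrix X + (2 * κ) • 1 + symmMatrix (-(X + Y)) := by
    rw [map_neg, map_add]
    module
  calc G (-(symmMatrix Y + (2 * κ) • 1)) (-q') s x
      ≤ G (-(symmMatrix Y + (2 * κ) • 1)) q r x + gam * ‖q + q'‖ := by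
        simpa only [sub_neg_eq_add] using hG.le_of_value_le hM q (-q') hsr x hx
    _ ≤ G (symmMatrix X + (2 * κ) • 1 + symmMatrix (-(X + Y))) q r x + Lam * (4 * κ) +
          gam * ‖q + q'‖ := by
        rw [← hsum]
        gcongr
        exact hG.le_add_smul_one hM (by positivity) q r x hx
    _ ≤ G (symmMatrix X + (2 * κ) • 1) q r x + gam * ‖q + q'‖ + Lam * (4 * κ) := by
        linarith [hG.add_posSemidef_le ((symmMatrix_isSymm X).add hone) hN q r x hx]

lemma HasOpposedSuperjets.sub_div_le {x y p : Eucl d}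
    (hjets : HasOpposedSuperjets (closure Ω) u (fun z => -v z) x y p) (hΩ : IsOpen Ω)
    (hx : x ∈ Ω) (hy : y ∈ Ω) (hG₁ : ProperOperator Lam gam (closure Ω) G₁)
    (hgap : ∀ M P r, ∀ x ∈ closure Ω, ∀ y ∈ closure Ω,
      G₂ M P r y ≤ G₁ M P r x + σ ‖x - y‖ + τ)
    (hu : ViscSubsol Ω (fun M P r x => G₁ M P r x + r / h) f u)
    (hv : ViscSupersol Ω (fun M P r x => G₂ M P r x + r / h) g v) (hvu : v y ≤ u x) :
    (u x - v y) / h ≤ f x - g y + gam * ‖p‖ + σ ‖x - y‖ + τ := by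
  obtain ⟨q, q', X, Y, rfl, hXY, hX, hY⟩ := hjets
  have hnhds : ∀ z ∈ Ω, closure Ω ∈ 𝓝 z := fun z hz =>
    mem_of_superset (hΩ.mem_nhds hz) subset_closure
  have hκ : ∀ κ > 0, (u x - v y) / h ≤
      f x - g y + gam * ‖q + q'‖ + σ ‖x - y‖ + τ + Lam * (4 * κ) := fun κ hκ => by
    have hsub := hu.le_of_isSuperjetWithin hx (hnhds x hx) hX hκ
    have hsuper := hv.le_of_isSuperjetWithin_neg hy (hnhds y hy) hY hκ
    rw [sub_div]
    linarith [hgap (-(symmMatrix Y + (2 * κ) • 1)) (-q') (v y) x (subset_closure hx) y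
      (subset_closure hy), hG₁.le_of_add_nonpos hXY hκ.le q q' hvu (subset_closure hx)]
  have hlim : Tendsto (fun κ : ℝ => f x - g y + gam * ‖q + q'‖ + σ ‖x - y‖ + τ + Lam * (4 * κ))
      (𝓝[>] 0) (𝓝 (f x - g y + gam * ‖q + q'‖ + σ ‖x - y‖ + τ)) := by
    refine tendsto_nhdsWithin_of_tendsto_nhds ?_
    exact Continuous.tendsto' (by fun_prop) _ _ (by ring)
  exact ge_of_tendsto hlim (eventually_mem_nhdsWithin.mono hκ)

lemma ViscSubsol.sub_le_of_viscSupersol (hΩ : IsOpen Ω) (hbd : Bornology.IsBounded Ω)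
    (hG₁ : ProperOperator Lam gam (closure Ω) G₁)
    (hgap : ∀ M P r, ∀ x ∈ closure Ω, ∀ y ∈ closure Ω,
      G₂ M P r y ≤ G₁ M P r x + σ ‖x - y‖ + τ)
    (hσ : Tendsto σ (𝓝 0) (𝓝 0)) (hh : 0 < h)
    (hus : ViscSubsol Ω (fun M P r x => G₁ M P r x + r / h) f u)
    (hvs : ViscSupersol Ω (fun M P r x => G₂ M P r x + r / h) g v)
    (hu : ContinuousOn u (closure Ω)) (hv : ContinuousOn v (closure Ω))
    (hf : ContinuousOn f (closure Ω)) (hg : ContinuousOn g (closure Ω))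
    (hfrontier : ∀ x ∈ frontier Ω, u x ≤ v x) (hfg : ∀ x ∈ closure Ω, f x ≤ g x + B)
    (hB : 0 ≤ B + τ) : ∀ x ∈ closure Ω, u x - v x ≤ h * (B + τ) := by
  intro x₀ hx₀
  obtain ⟨a, ha, hmax, x, y, p, hx, hy, hxa, hya, hp, hjets⟩ :=
    exists_opposed_superjets_tendsto_max hbd ⟨x₀, hx₀⟩ hu hv.neg
  refine (hmax hx₀).trans ?_
  obtain hva | hva := le_or_gt (u a) (v a)
  · exact (sub_nonpos.2 hva).trans (by positivity)
  have haΩ : a ∈ Ω := by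
    by_contra haΩ
    exact hva.not_ge (hfrontier a (hΩ.frontier_eq ▸ ⟨ha, haΩ⟩))
  have along : ∀ {φ : Eucl d → ℝ} {z : ℕ → Eucl d}, ContinuousOn φ (closure Ω) →
      (∀ n, z n ∈ closure Ω) → Tendsto z atTop (𝓝 a) →
      Tendsto (fun n => φ (z n)) atTop (𝓝 (φ a)) := fun hφ hz hza =>
    (hφ a ha).tendsto.comp (tendsto_nhdsWithin_iff.2 ⟨hza, .of_forall hz⟩)
  have hdist : Tendsto (fun n => ‖x n - y n‖) atTop (𝓝 0) := by
    simpa only [sub_self, norm_zero] using (hxa.sub hya).norm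
  have hle : ∀ᶠ n in atTop, (u (x n) - v (y n)) / h ≤
      f (x n) - g (y n) + gam * ‖p n‖ + σ ‖x n - y n‖ + τ := by
    filter_upwards [hxa.eventually (hΩ.mem_nhds haΩ), hya.eventually (hΩ.mem_nhds haΩ),
      (along hv hy hya).eventually_lt (along hu hx hxa) hva] with n hxn hyn hvu
    exact (hjets n).sub_div_le hΩ hxn hyn hG₁ hgap hus hvs hvu.le
  have hlim := le_of_tendsto_of_tendsto (((along hu hx hxa).sub (along hv hy hya)).div_const h)
    (((((along hf hx hxa).sub (along hg hy hya)).add (hp.norm.const_mul gam)).add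
      (hσ.comp hdist)).add_const τ) hle
  rw [norm_zero, mul_zero, add_zero, add_zero, div_le_iff₀' hh] at hlim
  exact hlim.trans (by gcongr; linarith [hfg a ha])

end Comparison

/-! ### Rothe increments -/

section Rothe

variable {d : ℕ} {Ω : Set (Eucl d)} {u : Eucl d → ℝ} {B : ℝ}

lemma supNorm_nonneg (u : Eucl d → ℝ) : 0 ≤ supNorm Ω u :=
  Real.sSup_nonneg (forall_mem_image.2 fun _ _ => abs_nonneg _)

lemma supNorm_le (hB : 0 ≤ B) (hu : ∀ x ∈ closure Ω, |u x| ≤ B) : supNorm Ω u ≤ B :=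
  Real.sSup_le (forall_mem_image.2 hu) hB

lemma abs_le_supNorm (hbd : Bornology.IsBounded Ω) (hu : ContinuousOn u (closure Ω)) {x : Eucl d}
    (hx : x ∈ closure Ω) : |u x| ≤ supNorm Ω u :=
  le_csSup (hbd.isCompact_closure.bddAbove_image hu.abs) (mem_image_of_mem _ hx)

lemma IsModulus.nonneg {σ : ℝ → ℝ} (hσ : IsModulus σ) {s : ℝ} (hs : 0 ≤ s) : 0 ≤ σ s :=
  hσ.2.2.symm.trans_le (hσ.1 hs)

/-- `σ₁` and `σ₂` bound the variation of `F` in space and in time, uniformly in the Hessian, the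
gradient and the value. -/
def HasSpaceTimeModuli (σ₁ σ₂ : ℝ → ℝ) (K : Set (Eucl d)) (S : Set ℝ)
    (F : Matrix (Fin d) (Fin d) ℝ → Eucl d → ℝ → Eucl d → ℝ → ℝ) : Prop :=
  ∀ M P r, ∀ x ∈ K, ∀ y ∈ K, ∀ t ∈ S, ∀ s ∈ S,
    |F M P r x t - F M P r y s| ≤ σ₁ ‖x - y‖ + σ₂ |t - s|

variable {Lam gam h K : ℝ} {m n : ℕ} {a b u v z₀ z₁ z₂ : Eucl d → ℝ} {σ₁ σ₂ : ℝ → ℝ}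
  {F : Matrix (Fin d) (Fin d) ℝ → Eucl d → ℝ → Eucl d → ℝ → ℝ}

lemma rotheTime_mem (hh : 0 ≤ h) (m : ℕ) : ((m : ℝ) + 1) * h ∈ Ici (0 : ℝ) :=
  mem_Ici.2 (by positivity)

lemma RotheStep.sub_le (hu : RotheStep Ω F h m a u) (hv : RotheStep Ω F h n b v) (hΩ : IsOpen Ω)
    (hbd : Bornology.IsBounded Ω)
    (hF : ProperOperator Lam gam (closure Ω) fun M P r x => F M P r x ((m + 1) * h))
    (hmod : HasSpaceTimeModuli σ₁ σ₂ (closure Ω) (Ici 0) F) (hσ₁ : Tendsto σ₁ (𝓝 0) (𝓝 0))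
    (hh : 0 < h) (ha : ContinuousOn a (closure Ω)) (hb : ContinuousOn b (closure Ω))
    (hab : ∀ x ∈ closure Ω, a x - b x ≤ B)
    (hB : 0 ≤ B + h * σ₂ |((m : ℝ) + 1) * h - ((n : ℝ) + 1) * h|) :
    ∀ x ∈ closure Ω, u x - v x ≤ B + h * σ₂ |((m : ℝ) + 1) * h - ((n : ℝ) + 1) * h| := by
  have hscale : B + h * σ₂ |((m : ℝ) + 1) * h - ((n : ℝ) + 1) * h| =
      h * (B / h + σ₂ |((m : ℝ) + 1) * h - ((n : ℝ) + 1) * h|) := by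
    rw [mul_add, mul_div_cancel₀ _ hh.ne']
  rw [hscale] at hB ⊢
  refine ViscSubsol.sub_le_of_viscSupersol hΩ hbd hF (fun M P r x hx y hy => ?_) hσ₁ hh
    hu.2.1.1 hv.2.1.2 hu.1 hv.1 (ha.div_const h) (hb.div_const h)
    (fun x hx => (hu.2.2 x hx).trans_le (hv.2.2 x hx).ge) (fun x hx => ?_)
    (nonneg_of_mul_nonneg_right hB hh)
  · linarith [(abs_le.1 (hmod M P r x hx y hy _ (rotheTime_mem hh.le m) _
      (rotheTime_mem hh.le n))).1]
  · rw [← add_div]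
    gcongr
    linarith [hab x hx]

lemma RotheStep.supNorm_sub_le (hz₁ : RotheStep Ω F h m z₀ z₁)
    (hz₂ : RotheStep Ω F h (m + 1) z₁ z₂) (hΩ : IsOpen Ω) (hbd : Bornology.IsBounded Ω)
    (hF : ∀ t ∈ Ici 0, ProperOperator Lam gam (closure Ω) fun M P r x => F M P r x t)
    (hmod : HasSpaceTimeModuli σ₁ σ₂ (closure Ω) (Ici 0) F) (hσ₁ : Tendsto σ₁ (𝓝 0) (𝓝 0))
    (hσ₂ : 0 ≤ σ₂ h) (hh : 0 < h) (hz₀ : ContinuousOn z₀ (closure Ω)) :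
    supNorm Ω (fun x => z₂ x - z₁ x) ≤ supNorm Ω (fun x => z₁ x - z₀ x) + h * σ₂ h := by
  have hD : 0 ≤ supNorm Ω (fun x => z₁ x - z₀ x) + h * σ₂ h :=
    add_nonneg (supNorm_nonneg _) (by positivity)
  have hD_le : ∀ x ∈ closure Ω, |z₁ x - z₀ x| ≤ supNorm Ω (fun x => z₁ x - z₀ x) := fun x hx =>
    abs_le_supNorm hbd (hz₁.1.sub hz₀) hx
  have htime : |(((m + 1 : ℕ) : ℝ) + 1) * h - ((m : ℝ) + 1) * h| = h := by
    rw [← sub_mul, Nat.cast_add_one, add_sub_add_right_eq_sub, add_sub_cancel_left, one_mul,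
      abs_of_pos hh]
  have hupper := hz₂.sub_le hz₁ hΩ hbd (hF _ (rotheTime_mem hh.le _)) hmod hσ₁ hh hz₁.1 hz₀
    (fun x hx => (abs_le.1 (hD_le x hx)).2) (htime.symm ▸ hD)
  have hlower := hz₁.sub_le hz₂ (B := supNorm Ω fun x => z₁ x - z₀ x) hΩ hbd
    (hF _ (rotheTime_mem hh.le _)) hmod hσ₁ hh hz₀ hz₁.1
    (fun x hx => by linarith [(abs_le.1 (hD_le x hx)).1]) (by rwa [abs_sub_comm, htime])
  rw [htime] at hupper
  rw [abs_sub_comm, htime] at hlower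
  exact supNorm_le hD fun x hx => abs_le.2 ⟨by linarith [hlower x hx], hupper x hx⟩

lemma RotheStep.abs_le_add (hz : RotheStep Ω F h m z₀ z₁) (hΩ : IsOpen Ω)
    (hbd : Bornology.IsBounded Ω)
    (hF : ProperOperator Lam gam (closure Ω) fun M P r x => F M P r x ((m + 1) * h))
    (hFK : ∀ x ∈ closure Ω, |F 0 0 0 x ((m + 1) * h)| ≤ K) (hh : 0 < h)
    (hz₀ : ∀ x ∈ closure Ω, |z₀ x| ≤ B) : ∀ x ∈ closure Ω, |z₁ x| ≤ B + K * h := by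
  intro x hx
  have hBK : 0 ≤ B + K * h := add_nonneg ((abs_nonneg _).trans (hz₀ x hx))
    (mul_nonneg ((abs_nonneg _).trans (hFK x hx)) hh.le)
  have hdiv : ∀ r > B + K * h, B / h + K < r / h := fun r hr => by
    rwa [div_add' _ _ _ hh.ne', div_lt_div_iff_of_pos_right hh]
  have hz₀_div : ∀ y ∈ closure Ω, |z₀ y / h| ≤ B / h := fun y hy => by
    rw [abs_div, abs_of_pos hh]
    gcongr
    exact hz₀ y hy
  have hmono : ∀ y ∈ closure Ω, ∀ {r s : ℝ}, s ≤ r →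
      F 0 0 s y ((m + 1) * h) ≤ F 0 0 r y ((m + 1) * h) := fun y hy _ _ hsr => by
    simpa only [sub_zero, norm_zero, mul_zero, add_zero] using
      hF.le_of_value_le Matrix.isSymm_zero 0 0 hsr y hy
  have hupper := hz.2.1.1.le_of_frontier_le hΩ hbd hz.1 (fun y hy => (hz.2.2 y hy).trans_le hBK)
    fun y hyΩ r hr => by
      have hy := subset_closure hyΩ
      linarith [(abs_le.1 (hz₀_div y hy)).2, (abs_le.1 (hFK y hy)).1, hdiv r hr,
        hmono y hy (hBK.trans hr.le)]
  have hlower := hz.2.1.2.neg.le_of_frontier_le (c := B + K * h) hΩ hbd hz.1.neg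
    (fun y hy => by rwa [hz.2.2 y hy, neg_zero]) fun y hyΩ r hr => by
      have hy := subset_closure hyΩ
      rw [neg_zero, neg_zero, neg_div]
      linarith [(abs_le.1 (hz₀_div y hy)).1, (abs_le.1 (hFK y hy)).2, hdiv r hr,
        hmono y hy (neg_nonpos.2 (hBK.trans hr.le))]
  exact abs_le.2 ⟨neg_le.1 (hlower x hx), hupper x hx⟩

theorem iterated_inductive_estimation_general {z : ℕ → Eucl d → ℝ} (hΩ : IsOpen Ω)
    (hbd : Bornology.IsBounded Ω)
    (hF : ∀ t ∈ Ici 0, ProperOperator Lam gam (closure Ω) fun M P r x => F M P r x t)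
    (hmod : HasSpaceTimeModuli σ₁ σ₂ (closure Ω) (Ici 0) F) (hσ₁ : IsModulus σ₁)
    (hσ₂ : IsModulus σ₂) (hK : 0 ≤ K) (hFK : ∀ x ∈ closure Ω, ∀ t ∈ Ici 0, |F 0 0 0 x t| ≤ K)
    (hh : 0 < h) (hz₀ : ∀ x, z 0 x = 0) (hz : ∀ m, RotheStep Ω F h m (z m) (z (m + 1))) :
    (∀ m : ℕ, supNorm Ω (fun x => z (m + 1) x - z m x) ≤
      supNorm Ω (z 1) + (m : ℝ) * h * σ₂ h) ∧
    ∀ {C₀ T : ℝ}, 0 ≤ T → σ₂ h ≤ C₀ * h →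
      supNorm Ω (fun x => z (⌊T / h⌋₊ + 1) x - z ⌊T / h⌋₊ x) ≤ (K + T * C₀) * h := by
  have hσ₁_lim : Tendsto σ₁ (𝓝 0) (𝓝 0) := hσ₁.2.1.tendsto' 0 0 hσ₁.2.2
  have hσ₂h : 0 ≤ σ₂ h := hσ₂.nonneg hh.le
  have hcont : ∀ m, ContinuousOn (z m) (closure Ω)
    | 0 => continuousOn_const.congr fun x _ => hz₀ x
    | m + 1 => (hz m).1
  have hincrement : ∀ m : ℕ, supNorm Ω (fun x => z (m + 1) x - z m x) ≤
      supNorm Ω (z 1) + (m : ℝ) * h * σ₂ h := fun m => by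
    induction m with
    | zero => simp [hz₀]
    | succ m ih =>
      have hstep := (hz m).supNorm_sub_le (hz (m + 1)) hΩ hbd hF hmod hσ₁_lim hσ₂h hh (hcont m)
      rw [Nat.cast_add_one]
      linarith
  refine ⟨hincrement, fun {C₀ T} hT hC₀ => (hincrement _).trans ?_⟩
  have hfirst : supNorm Ω (z 1) ≤ K * h := supNorm_le (by positivity) fun x hx => by
    simpa only [zero_add] using (hz 0).abs_le_add (B := 0) hΩ hbd (hF _ (rotheTime_mem hh.le 0))
      (fun y hy => hFK y hy _ (rotheTime_mem hh.le 0)) hh (fun y _ => by simp [hz₀]) x hx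
  have hfloor : ⌊T / h⌋₊ * h ≤ T := (le_div_iff₀ hh).1 (Nat.floor_le (by positivity))
  calc supNorm Ω (z 1) + ⌊T / h⌋₊ * h * σ₂ h ≤ K * h + T * (C₀ * h) :=
        add_le_add hfirst (mul_le_mul hfloor hC₀ hσ₂h hT)
    _ = (K + T * C₀) * h := by ring

end Rothe

/-- **Iterated inductive estimation and the Lipschitz-in-time bound.**  Under the
hypotheses of the inductive estimation one has
`‖z_{n+1,h} - z_{n,h}‖_∞ ≤ ‖z_{1,h}‖_∞ + n h σ₂(h)` for every `n ≥ 0`; consequently, if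
`σ₂(h) ≤ C₀ h`, there is `C` depending only on `K, C₀, T` (not on `h`) with
`‖z_{n+1,h} - z_{n,h}‖_∞ ≤ C h` for `n = ⌊T/h⌋`. -/
theorem iterated_inductive_estimation (K C₀ T : ℝ)
    (hK : 0 ≤ K) (hC₀ : 0 ≤ C₀) (hT : 0 < T) :
    ∃ C : ℝ, ∀ (d : ℕ) (lam Lam gam : ℝ),
      0 < lam → lam ≤ Lam → 0 ≤ gam →
      ∀ (Ω : Set (Eucl d)), IsOpen Ω → Bornology.IsBounded Ω →
      ∀ (F : Matrix (Fin d) (Fin d) ℝ → Eucl d → ℝ → Eucl d → ℝ → ℝ)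
        (ω : ℝ → ℝ → ℝ) (σ₁ σ₂ : ℝ → ℝ),
        ContinuousOn
          (fun q : Matrix (Fin d) (Fin d) ℝ × Eucl d × ℝ × Eucl d × ℝ =>
            F q.1 q.2.1 q.2.2.1 q.2.2.2.1 q.2.2.2.2)
          (univ ×ˢ univ ×ˢ univ ×ˢ closure Ω ×ˢ Ici 0) →
        UniformlyElliptic lam Lam (closure Ω) (Ici 0) F →
        StructureCondition lam Lam gam ω (closure Ω) (Ici 0) F →
        IsModulus σ₁ → IsModulus σ₂ →
        (∀ (M : Matrix (Fin d) (Fin d) ℝ) (P : Eucl d) (r : ℝ),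
          ∀ x ∈ closure Ω, ∀ y ∈ closure Ω, ∀ t ∈ Ici (0:ℝ), ∀ s ∈ Ici (0:ℝ),
            |F M P r x t - F M P r y s| ≤ σ₁ ‖x - y‖ + σ₂ |t - s|) →
        (∀ x ∈ closure Ω, ∀ t ∈ Ici (0:ℝ), |F 0 0 0 x t| ≤ K) →
        ∀ h : ℝ, h ∈ Ioc (0:ℝ) 1 →
          ∀ z : ℕ → Eucl d → ℝ, (∀ x, z 0 x = 0) →
            (∀ m : ℕ, RotheStep Ω F h m (z m) (z (m + 1))) →
            (∀ m : ℕ, supNorm Ω (fun x => z (m + 1) x - z m x) ≤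
                supNorm Ω (z 1) + (m : ℝ) * h * σ₂ h) ∧
            ((∀ h' ∈ Ioc (0:ℝ) 1, σ₂ h' ≤ C₀ * h') →
              supNorm Ω (fun x => z (⌊T / h⌋₊ + 1) x - z ⌊T / h⌋₊ x) ≤ C * h) := by
  refine ⟨K + T * C₀, fun d lam Lam gam hlam hLam _ Ω hΩ hbd F ω σ₁ σ₂ _ hell hstr hσ₁ hσ₂ hmod
    hFK h hh z hz₀ hz => ?_⟩
  have hestimate := iterated_inductive_estimation_general hΩ hbd
    (fun t ht => hell.properOperator hstr hlam.le (hlam.le.trans hLam) ht) hmod hσ₁ hσ₂ hK hFK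
    hh.1 hz₀ hz
  exact ⟨hestimate.1, fun hC => hestimate.2 hT.le (hC h hh)⟩

end
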